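/- Let S be a profinite semigroup topologically generated by a finite subset. Then S has only finitely many regular J-classes if and only if there exists a locally finite pseudovariety V such that S is a pro-(LG ⓜ V) semigroup. -/

import Mathlib

/-- A bundled finite semigroup. -/
structure FinSgp : Type 1 where
  carrier : Type
  [str : Semigroup carrier]
  [fin : Finite carrier]

attribute [instance] FinSgp.str FinSgp.fin

/-- Finite semigroups carry the discrete topology. -/
instance (T : FinSgp) : TopologicalSpace T.carrier := ⊥

instance (T : FinSgp) : DiscreteTopology T.carrier := ⟨rfl⟩

/-- A pseudovariety of finite semigroups: a class of finite semigroups closed under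
homomorphic images, (isomorphic copies of) subsemigroups, and binary direct products. -/
def IsPseudovariety (V : Set FinSgp) : Prop :=
  (∀ S ∈ V, ∀ (T : FinSgp) (f : S.carrier →ₙ* T.carrier), Function.Surjective f → T ∈ V) ∧
  (∀ S ∈ V, ∀ (T : FinSgp) (f : T.carrier →ₙ* S.carrier), Function.Injective f → T ∈ V) ∧
  (∀ S ∈ V, ∀ T ∈ V, (FinSgp.mk (S.carrier × T.carrier)) ∈ V)

/-- A profinite semigroup: a compact, Hausdorff, totally disconnected topological semigroup. -/
def IsProfiniteSgp (S : Type) [Semigroup S] [TopologicalSpace S] : Prop :=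
  ContinuousMul S ∧ CompactSpace S ∧ T2Space S ∧ TotallyDisconnectedSpace S

/-- A pro-V semigroup: a profinite semigroup whose points are separated by continuous
homomorphisms onto finite semigroups belonging to V. -/
def IsProV (V : Set FinSgp) (S : Type) [Semigroup S] [TopologicalSpace S] : Prop :=
  IsProfiniteSgp S ∧ ∀ x y : S, x ≠ y →
    ∃ (T : FinSgp) (f : S →ₙ* T.carrier),
      T ∈ V ∧ Continuous f ∧ Function.Surjective f ∧ f x ≠ f y

/-- `A` topologically generates the topological semigroup `S`. -/
def TopGen (S : Type) [Semigroup S] [TopologicalSpace S] (A : Set S) : Prop :=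
  closure ((Subsemigroup.closure A : Subsemigroup S) : Set S) = Set.univ

/-- A topological semigroup is locally countable if every closed subsemigroup
topologically generated by a finite subset is countable. -/
def IsLocCountable (S : Type) [Semigroup S] [TopologicalSpace S] : Prop :=
  ∀ A : Set S, A.Finite →
    (closure ((Subsemigroup.closure A : Subsemigroup S) : Set S)).Countable

/-- A pseudovariety is locally countable if every pro-V semigroup is locally countable. -/
def PVLocallyCountable (V : Set FinSgp) : Prop :=
  ∀ (S : Type) [Semigroup S] [TopologicalSpace S], IsProV V S → IsLocCountable S

/-- A pseudovariety is locally finite if every finitely generated pro-V semigroup is finite. -/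
def PVLocallyFinite (V : Set FinSgp) : Prop :=
  ∀ (S : Type) [Semigroup S] [TopologicalSpace S], IsProV V S →
    (∃ A : Set S, A.Finite ∧ TopGen S A) → Finite S

/-- The join of two pseudovarieties: the smallest pseudovariety containing both. -/
def PVJoin (V W : Set FinSgp) : Set FinSgp :=
  ⋂₀ {U | IsPseudovariety U ∧ V ⊆ U ∧ W ⊆ U}

/-- The preimage of an idempotent under a semigroup homomorphism, as a subsemigroup. -/
def idemFiber {S T : Type} [Semigroup S] [Semigroup T] (f : S →ₙ* T)
    (e : T) (he : e * e = e) : Subsemigroup S where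
  carrier := f ⁻¹' {e}
  mul_mem' := fun {a b} ha hb => by
    simp only [Set.mem_preimage, Set.mem_singleton_iff] at ha hb ⊢
    rw [map_mul, ha, hb, he]

/-- A subsemigroup of a finite semigroup, as a bundled finite semigroup. -/
def subFinSgp {S : Type} [Semigroup S] [Finite S] (T : Subsemigroup S) : FinSgp :=
  FinSgp.mk T

/-- The generators of the Mal'cev product `V ⓜ W`: finite semigroups `S` admitting a
homomorphism onto some `T ∈ W` whose fibers over idempotents lie in `V`. -/
def MalcevWitness (V W : Set FinSgp) (S : FinSgp) : Prop :=
  ∃ (T : FinSgp) (f : S.carrier →ₙ* T.carrier), T ∈ W ∧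
    ∀ (e : T.carrier) (he : e * e = e), subFinSgp (idemFiber f e he) ∈ V

/-- The Mal'cev product of two pseudovarieties: the smallest pseudovariety containing
all its generators. -/
def Malcev (V W : Set FinSgp) : Set FinSgp :=
  ⋂₀ {U | IsPseudovariety U ∧ ∀ S : FinSgp, MalcevWitness V W S → S ∈ U}

/-- Green's preorder `≤_L`. -/
def lLE {S : Type} [Semigroup S] (u v : S) : Prop := u = v ∨ ∃ x, u = x * v

/-- Green's relation `L`. -/
def GreenL {S : Type} [Semigroup S] (u v : S) : Prop := lLE u v ∧ lLE v u

/-- Green's preorder `≤_J`. -/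
def jLE {S : Type} [Semigroup S] (u v : S) : Prop :=
  u = v ∨ (∃ x, u = v * x) ∨ (∃ x, u = x * v) ∨ (∃ x y, u = x * v * y)

/-- Green's relation `J`. -/
def GreenJ {S : Type} [Semigroup S] (u v : S) : Prop := jLE u v ∧ jLE v u

/-- A regular element of a semigroup. -/
def IsRegularElt {S : Type} [Semigroup S] (s : S) : Prop := ∃ t, s = s * t * s

/-- `S` has only finitely many regular `J`-classes. -/
def FinManyRegJ (S : Type) [Semigroup S] : Prop :=
  ∃ F : Set S, F.Finite ∧ ∀ s : S, IsRegularElt s → ∃ t ∈ F, GreenJ s t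

/-- A subgroup of a semigroup: a subsemigroup which is a group under the induced
multiplication. -/
def IsSgpSubgroup (S : Type) [Semigroup S] (G : Set S) : Prop :=
  (∀ x ∈ G, ∀ y ∈ G, x * y ∈ G) ∧
  ∃ e ∈ G, (∀ x ∈ G, e * x = x ∧ x * e = x) ∧ (∀ x ∈ G, ∃ y ∈ G, x * y = e ∧ y * x = e)

/-- A group element of a semigroup: an element lying in some subgroup. -/
def IsGroupElt (S : Type) [Semigroup S] (s : S) : Prop :=
  ∃ G : Set S, IsSgpSubgroup S G ∧ s ∈ G

/-- `prodFrom f n` is the product `f 0 * f 1 * ⋯ * f n`. -/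
def prodFrom {S : Type} [Semigroup S] (f : ℕ → S) : ℕ → S
  | 0 => f 0
  | n + 1 => prodFrom f n * f (n + 1)

/-- A semigroup is nilpotent if it has a zero element and some length bound beyond
which all products equal zero. -/
def IsNilpotentSgp (S : Type) [Semigroup S] : Prop :=
  ∃ z : S, (∀ x : S, z * x = z ∧ x * z = z) ∧ ∃ n : ℕ, ∀ f : ℕ → S, prodFrom f n = z

/-- The pseudovariety `N` of finite nilpotent semigroups. -/
def NPv : Set FinSgp := {S | IsNilpotentSgp S.carrier}

/-- A semigroup which is a group. -/
def IsGroupSgp (S : Type) [Semigroup S] : Prop :=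
  ∃ e : S, (∀ x : S, e * x = x ∧ x * e = x) ∧ ∀ x : S, ∃ y : S, x * y = e ∧ y * x = e

/-- The pseudovariety `LG` of finite local groups: `eSe` is a group for each idempotent `e`. -/
def LG : Set FinSgp :=
  {S | ∀ e : S.carrier, e * e = e → ∀ s : S.carrier,
      ∃ t : S.carrier, (e * s * e) * (e * t * e) = e ∧ (e * t * e) * (e * s * e) = e}

/-- The pseudovariety `IE` of finite semigroups with exactly one idempotent. -/
def IE : Set FinSgp := {S | ∃! e : S.carrier, e * e = e}

/-- A bundled topological semigroup (carrier, multiplication, topology). -/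
structure TopSgp : Type 1 where
  carrier : Type
  [str : Semigroup carrier]
  [top : TopologicalSpace carrier]

attribute [instance] TopSgp.str TopSgp.top

/-- The fiber of a relational morphism over an idempotent, as a subsemigroup of the
domain. -/
def relFiber {S T : Type} [Semigroup S] [Semigroup T] (μ : Subsemigroup (S × T))
    (e : T) (he : e * e = e) : Subsemigroup S where
  carrier := {s | (s, e) ∈ μ}
  mul_mem' := fun {a b} ha hb => by
    have h := μ.mul_mem ha hb
    simpa [Prod.mk_mul_mk, he] using h

/-- `spow x n = x ^ (n + 1)` in a semigroup. -/
def spow {S : Type} [Semigroup S] (x : S) : ℕ → S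
  | 0 => x
  | n + 1 => spow x n * x

/-- The pseudovariety `A ∩ ESl` of finite aperiodic semigroups with commuting idempotents. -/
def AESl : Set FinSgp :=
  {S | (∃ n : ℕ, ∀ x : S.carrier, spow x (n + 1) = spow x n) ∧
       (∀ e f : S.carrier, e * e = e → f * f = f → e * f = f * e)}

/-!
A regular `J`-class is determined by the set `SeS`, for any of its idempotents `e`. If there are
only finitely many such sets, which are closed, then one continuous homomorphism `q` to a finite
semigroup `T` separates them, so that idempotents with the same image under `q` are `J`-equivalent.
In a compact semigroup `J`-equivalent idempotents are incomparable unless equal. As comparable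
idempotents lift along continuous homomorphisms, the fibers over idempotents of any finite quotient
of `S` through which `q` factors are local groups; for `V` one takes the pseudovariety of `T`.

Conversely, words over `A` modulo the identities of a locally finite `V` form a finite semigroup
`F`, and the closure in `S × F` of the set of pairs of values of words is a relational morphism
from `S` to `F`. All idempotents in its fiber over an idempotent are primitive, since this holds in
every quotient of `S` in `LG ⓜ V`. By compactness they are `J`-equivalent, so that there are at
most as many regular `J`-classes as idempotents of `F`.
-/

open Function (Surjective Injective FactorsThrough)
open Subsemigroup (corner mem_corner_iff)

section Sandwich

variable {S T : Type*} [Semigroup S] [Semigroup T]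

/-- The set `SaS` of all products `x * a * y`, as a subsemigroup. It may be strictly smaller than
the principal ideal of `a`, but the two agree when `a` is regular. -/
def sandwich (a : S) : Subsemigroup S where
  carrier := Set.range fun p : S × S => p.1 * a * p.2
  mul_mem' := by
    rintro _ _ ⟨p, rfl⟩ ⟨p', rfl⟩
    exact ⟨(p.1, p.2 * (p'.1 * a * p'.2)), by simp only [mul_assoc]⟩

theorem mem_sandwich {a b : S} : b ∈ sandwich a ↔ ∃ x y, x * a * y = b := Prod.exists

theorem sandwich_le_of_mem {a b : S} (h : b ∈ sandwich a) : sandwich b ≤ sandwich a := by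
  obtain ⟨x, y, rfl⟩ := mem_sandwich.1 h
  intro c hc
  obtain ⟨s, t, rfl⟩ := mem_sandwich.1 hc
  exact mem_sandwich.2 ⟨s * x, y * t, by simp only [mul_assoc]⟩

theorem map_mem_sandwich (f : S →ₙ* T) {a b : S} (h : b ∈ sandwich a) :
    f b ∈ sandwich (f a) := by
  obtain ⟨x, y, rfl⟩ := mem_sandwich.1 h
  exact mem_sandwich.2 ⟨f x, f y, by simp only [map_mul]⟩

theorem map_mem_corner (f : S →ₙ* T) {e a : S} (h : a ∈ corner e) : f a ∈ corner (f e) := by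
  obtain ⟨s, rfl⟩ := h
  exact ⟨f s, by simp only [map_mul]⟩

theorem mem_map_corner {q : S →ₙ* T} (hq : Surjective q) {e : S} {b : T}
    (hb : b ∈ corner (q e)) : b ∈ (corner e).map q := by
  obtain ⟨t, rfl⟩ := hb
  obtain ⟨s, rfl⟩ := hq t
  exact ⟨e * s * e, ⟨s, rfl⟩, by simp only [map_mul]⟩

end Sandwich

section RegularJ

variable {S : Type} [Semigroup S] {a b e : S}

theorem jLE.sandwich_le (h : jLE a b) : sandwich a ≤ sandwich b := by
  intro c hc
  obtain ⟨s, t, rfl⟩ := mem_sandwich.1 hc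
  rcases h with rfl | ⟨x, rfl⟩ | ⟨x, rfl⟩ | ⟨x, y, rfl⟩
  · exact hc
  · exact mem_sandwich.2 ⟨s, x * t, by simp only [mul_assoc]⟩
  · exact mem_sandwich.2 ⟨s * x, t, by simp only [mul_assoc]⟩
  · exact sandwich_le_of_mem (mem_sandwich.2 ⟨x, y, rfl⟩) hc

theorem IsRegularElt.mem_sandwich (ha : IsRegularElt a) : a ∈ sandwich a := by
  obtain ⟨t, ht⟩ := ha
  exact _root_.mem_sandwich.2 ⟨a * t, t * a, by simp only [← mul_assoc, ← ht]⟩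

theorem isRegularElt_of_isIdempotentElem (he : IsIdempotentElem e) : IsRegularElt e :=
  ⟨e, by rw [he, he]⟩

theorem IsRegularElt.jLE_of_sandwich_le (ha : IsRegularElt a) (h : sandwich a ≤ sandwich b) :
    jLE a b := by
  obtain ⟨x, y, hxy⟩ := _root_.mem_sandwich.1 (h ha.mem_sandwich)
  exact .inr (.inr (.inr ⟨x, y, hxy.symm⟩))

theorem IsRegularElt.greenJ_iff_sandwich_eq (ha : IsRegularElt a) (hb : IsRegularElt b) :
    GreenJ a b ↔ sandwich a = sandwich b :=
  ⟨fun h => le_antisymm h.1.sandwich_le h.2.sandwich_le,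
    fun h => ⟨ha.jLE_of_sandwich_le h.le, hb.jLE_of_sandwich_le h.ge⟩⟩

theorem IsRegularElt.exists_isIdempotentElem_sandwich_eq (ha : IsRegularElt a) :
    ∃ e, IsIdempotentElem e ∧ sandwich e = sandwich a := by
  obtain ⟨t, ht⟩ := ha
  have ha_le : jLE a (a * t) := .inr (.inl ⟨a, ht⟩)
  have le_ha : jLE (a * t) a := .inr (.inl ⟨t, rfl⟩)
  exact ⟨a * t, by rw [IsIdempotentElem, ← mul_assoc, ← ht],
    le_antisymm le_ha.sandwich_le ha_le.sandwich_le⟩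

theorem finManyRegJ_iff_finite_sandwich :
    FinManyRegJ S ↔ (sandwich '' {e : S | IsIdempotentElem e}).Finite := by
  constructor
  · rintro ⟨F, hF, hreg⟩
    refine (hF.image sandwich).subset ?_
    rintro _ ⟨e, he, rfl⟩
    obtain ⟨t, htF, het, hte⟩ := hreg e (isRegularElt_of_isIdempotentElem he)
    exact ⟨t, htF, le_antisymm hte.sandwich_le het.sandwich_le⟩
  · intro hfin
    obtain ⟨E, hE, hbij⟩ := Set.exists_subset_bijOn {e : S | IsIdempotentElem e} sandwich
    refine ⟨E, hbij.finite_iff_finite.2 hfin, fun s hs => ?_⟩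
    obtain ⟨e, he, hes⟩ := hs.exists_isIdempotentElem_sandwich_eq
    obtain ⟨t, htE, hte⟩ := hbij.surjOn ⟨e, he, rfl⟩
    exact ⟨t, htE, (hs.greenJ_iff_sandwich_eq
      (isRegularElt_of_isIdempotentElem (hE htE))).2 (hes.symm.trans hte.symm)⟩

end RegularJ

/-- All idempotents of `S` are primitive: no idempotent lies strictly below another one in the
natural order, where `f ≤ e` means `f ∈ eSe`. -/
def IdempotentsPrimitive (S : Type*) [Semigroup S] : Prop :=
  ∀ ⦃e f : S⦄, IsIdempotentElem e → IsIdempotentElem f → f ∈ corner e → f = e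

theorem IdempotentsPrimitive.of_injective {S T : Type*} [Semigroup S] [Semigroup T]
    (hT : IdempotentsPrimitive T) (f : S →ₙ* T) (hf : Injective f) : IdempotentsPrimitive S :=
  fun _ _ ha hb hba => hf (hT (ha.map f) (hb.map f) (map_mem_corner f hba))

section CompactSemigroup

variable {S : Type*} [Semigroup S] [TopologicalSpace S] [ContinuousMul S] [CompactSpace S]

theorem isClosed_sandwich [T2Space S] (a : S) : IsClosed (sandwich a : Set S) :=
  (isCompact_range (by fun_prop)).isClosed

theorem isClosed_corner [T2Space S] (e : S) : IsClosed (corner e : Set S) :=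
  (isCompact_range (by fun_prop)).isClosed

variable [T2Space S]

theorem exists_isIdempotentElem_mem {N : Subsemigroup S} (hN : IsClosed (N : Set S))
    (hne : (N : Set S).Nonempty) : ∃ e ∈ N, IsIdempotentElem e := by
  obtain ⟨e, heN, he⟩ := exists_idempotent_in_compact_subsemigroup continuous_mul_const
    (N : Set S) hne hN.isCompact fun _ hx _ hy => N.mul_mem hx hy
  exact ⟨e, heN, he⟩

theorem exists_isIdempotentElem_map_eq {T : Type*} [Semigroup T] [TopologicalSpace T] [T1Space T]
    {q : S →ₙ* T} (hq : Continuous q) {N : Subsemigroup S} (hN : IsClosed (N : Set S)) {b : T}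
    (hb : IsIdempotentElem b) (hbN : b ∈ N.map q) : ∃ a ∈ N, IsIdempotentElem a ∧ q a = b := by
  let fiber : Subsemigroup S :=
    { carrier := {s | q s = b}
      mul_mem' := fun {x y} (hx : q x = b) (hy : q y = b) => by
        rw [Set.mem_ofPred_eq, map_mul, hx, hy, hb] }
  obtain ⟨a, haN, hab⟩ := hbN
  obtain ⟨c, ⟨hcN, hcb⟩, hc⟩ := exists_isIdempotentElem_mem (N := N ⊓ fiber)
    (hN.inter (isClosed_singleton.preimage hq)) ⟨a, haN, hab⟩
  exact ⟨c, hcN, hc, hcb⟩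

theorem exists_commute_isIdempotentElem_mul (x : S) :
    ∃ m, Commute x m ∧ IsIdempotentElem (x * m) := by
  let N : Subsemigroup S :=
    { carrier := (x * ·) '' {m | x * m = m * x}
      mul_mem' := by
        rintro _ _ ⟨m, hm : Commute x m, rfl⟩ ⟨n, hn : Commute x n, rfl⟩
        exact ⟨m * x * n, (hm.mul_right (Commute.refl x)).mul_right hn, by simp only [mul_assoc]⟩ }
  have hclosed : IsClosed (N : Set S) :=
    (((isClosed_eq (by fun_prop) (by fun_prop)).isCompact).image (continuous_const_mul x)).isClosed
  obtain ⟨_, ⟨m, hm, rfl⟩, hidem⟩ := exists_isIdempotentElem_mem hclosed ⟨x * x, x, rfl, rfl⟩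
  exact ⟨m, hm, hidem⟩

theorem eq_of_mem_corner_of_mem_sandwich {e f : S} (he : IsIdempotentElem e)
    (hf : IsIdempotentElem f) (hfe : f ∈ corner e) (hef : e ∈ sandwich f) : f = e := by
  obtain ⟨x, y, hxy⟩ := mem_sandwich.1 hef
  obtain ⟨e_mul_f, f_mul_e⟩ := (mem_corner_iff he).1 hfe
  have mul_e {z : S} (hz : z * f = z) : z * e = z := by rw [← hz, mul_assoc, f_mul_e]
  -- The `z ∈ Sf` with `e ∈ zS` form a closed subsemigroup, and an idempotent such `z` equals `e`.
  let N : Subsemigroup S :=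
    { carrier := Prod.fst '' {p : S × S | p.1 * f = p.1 ∧ p.1 * p.2 = e}
      mul_mem' := by
        rintro _ _ ⟨⟨z, v⟩, ⟨hz, hzv⟩, rfl⟩ ⟨⟨z', v'⟩, ⟨hz', hzv'⟩, rfl⟩
        refine ⟨(z * z', v' * v), ⟨by rw [mul_assoc, hz'], ?_⟩, rfl⟩
        calc z * z' * (v' * v) = z * (z' * v') * v := by simp only [mul_assoc]
          _ = e := by rw [hzv', mul_e hz, hzv] }
  have hclosed : IsClosed (N : Set S) :=
    isClosedMap_fst_of_compactSpace _ <|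
      (isClosed_eq (by fun_prop) (by fun_prop)).inter (isClosed_eq (by fun_prop) (by fun_prop))
  obtain ⟨_, ⟨⟨z, v⟩, ⟨hzf, hzv⟩, rfl⟩, hz⟩ := exists_isIdempotentElem_mem hclosed
    ⟨x * f, (x * f, y), ⟨by rw [mul_assoc, hf], hxy⟩, rfl⟩
  have hze : z = e := by
    calc z = z * (z * v) := by rw [hzv, mul_e hzf]
      _ = e := by rw [← mul_assoc, hz, hzv]
  rw [← e_mul_f, ← hze, hzf]

theorem IdempotentsPrimitive.mem_sandwich (hS : IdempotentsPrimitive S) {e : S}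
    (he : IsIdempotentElem e) (g : S) : e ∈ sandwich g := by
  have hclosed : IsClosed ((corner e ⊓ sandwich g : Subsemigroup S) : Set S) :=
    (isClosed_corner e).inter (isClosed_sandwich g)
  obtain ⟨f, ⟨hfe, hfg⟩, hf⟩ := exists_isIdempotentElem_mem hclosed
    ⟨e * g * e, ⟨g, rfl⟩, (e, e), rfl⟩
  exact hS he hf hfe ▸ hfg

theorem IdempotentsPrimitive.sandwich_eq {N : Subsemigroup S} (hN : IdempotentsPrimitive N)
    (hclosed : IsClosed (N : Set S)) {e f : S} (heN : e ∈ N) (hfN : f ∈ N)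
    (he : IsIdempotentElem e) (hf : IsIdempotentElem f) : sandwich e = sandwich f := by
  have : CompactSpace N := isCompact_iff_compactSpace.1 hclosed.isCompact
  have hle {g h : S} (hg : IsIdempotentElem g) (hgN : g ∈ N) (hhN : h ∈ N) :
      sandwich g ≤ sandwich h :=
    have hg' : IsIdempotentElem (⟨g, hgN⟩ : N) := Subtype.ext hg
    sandwich_le_of_mem (map_mem_sandwich (MulMemClass.subtype N) (hN.mem_sandwich hg' ⟨h, hhN⟩))
  exact le_antisymm (hle he heN hfN) (hle hf hfN heN)

end CompactSemigroup

section LocalGroups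

theorem mem_LG_iff_idempotentsPrimitive {T : FinSgp} :
    T ∈ LG ↔ IdempotentsPrimitive T.carrier := by
  constructor
  · intro hT e f he hf hfe
    obtain ⟨t, ht, -⟩ := hT e he f
    obtain ⟨hef, hfe⟩ := (mem_corner_iff he).1 hfe
    rw [hef, hfe] at ht
    calc f = f * e := hfe.symm
      _ = f * f * (e * t * e) := by rw [mul_assoc, ht]
      _ = e := by rw [hf, ht]
  · intro hT e he s
    have he' : IsIdempotentElem e := he
    obtain ⟨hex, hxe⟩ := (mem_corner_iff he').1 ⟨s, rfl⟩
    obtain ⟨m, hm, hidem⟩ := exists_commute_isIdempotentElem_mul (e * s * e)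
    have hxm : e * s * e * m = e := hT he' hidem <|
      (mem_corner_iff he').2 ⟨by rw [← mul_assoc, hex], by rw [hm.eq, mul_assoc, hxe]⟩
    exact ⟨m, by rw [← mul_assoc, ← mul_assoc, hxe, hxm, he],
      by rw [mul_assoc (e * m), hex, mul_assoc e m, ← hm.eq, hxm, he]⟩

theorem isPseudovariety_LG : IsPseudovariety LG := by
  refine ⟨fun S hS T f hf e he s => ?_, fun S hS T f hf => ?_, fun S hS T hT e he s => ?_⟩
  · obtain ⟨d, -, hd, rfl⟩ := exists_isIdempotentElem_map_eq (q := f)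
      continuous_of_discreteTopology (N := ⊤) isClosed_univ he (by simpa using hf e)
    obtain ⟨r, rfl⟩ := hf s
    obtain ⟨t, hst, hts⟩ := hS d hd r
    exact ⟨f t, by simpa only [map_mul] using congrArg f hst,
      by simpa only [map_mul] using congrArg f hts⟩
  · exact mem_LG_iff_idempotentsPrimitive.2
      ((mem_LG_iff_idempotentsPrimitive.1 hS).of_injective f hf)
  · obtain ⟨t, hst, hts⟩ := hS e.1 (congrArg Prod.fst he) s.1
    obtain ⟨t', hst', hts'⟩ := hT e.2 (congrArg Prod.snd he) s.2
    exact ⟨(t, t'), Prod.ext hst hst', Prod.ext hts hts'⟩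

end LocalGroups

section Separation

variable {S : Type} [Semigroup S]

/-- The syntactic congruence of `K`: the coarsest congruence for which `K` is a union of classes.
Contexts range over `S` with an identity adjoined, which allows empty contexts. -/
def syntacticCon (K : Set S) : Con S where
  r a b := ∀ u v : WithOne S, u * a * v ∈ WithOne.coe '' K ↔ u * b * v ∈ WithOne.coe '' K
  iseqv :=
    { refl := fun _ _ _ => Iff.rfl
      symm := fun h u v => (h u v).symm
      trans := fun h h' u v => (h u v).trans (h' u v) }
  mul' := fun {a b c d} hab hcd u v => by
    have hac := hab u (c * v)
    have hbd := hcd (u * b) v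
    simp only [WithOne.coe_mul, mul_assoc] at hac hbd ⊢
    exact hac.trans hbd

theorem syntacticCon_iff {K : Set S} {a b : S} :
    syntacticCon K a b ↔ ((a ∈ K ↔ b ∈ K) ∧ ∀ v, a * v ∈ K ↔ b * v ∈ K) ∧
      ∀ u, (u * a ∈ K ↔ u * b ∈ K) ∧ ∀ v, u * a * v ∈ K ↔ u * b * v ∈ K := by
  change (∀ u v : WithOne S, _) ↔ _
  simp only [WithOne.forall, one_mul, mul_one, ← WithOne.coe_mul,
    WithOne.coe_injective.mem_set_image]

theorem isOpen_setOf_forall_mem_iff {X Y Z : Type*} [TopologicalSpace X] [TopologicalSpace Y]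
    [TopologicalSpace Z] [CompactSpace X] {g : X → Y → Z}
    (hg : Continuous fun p : X × Y => g p.1 p.2) {K : Set Z} (hK : IsClopen K) (y : Y) :
    IsOpen {y' | ∀ x, g x y' ∈ K ↔ g x y ∈ K} := by
  have hA : IsClopen {p : X × Y | g p.1 p.2 ∈ K} := hK.preimage hg
  have hB : IsClopen {p : X × Y | g p.1 y ∈ K} :=
    hK.preimage (hg.comp (continuous_fst.prodMk continuous_const))
  have hAB : IsOpen {p : X × Y | g p.1 p.2 ∈ K ↔ g p.1 y ∈ K} := by
    simpa only [iff_iff_implies_and_implies] using! ((hA.himp hB).inter (hB.himp hA)).isOpen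
  convert isClosedMap_iff_kernImage.1 isClosedMap_snd_of_compactSpace hAB using 1
  ext y'
  simp [Set.kernImage]

theorem isLocallyConstant_mkMulHom_syntacticCon [TopologicalSpace S] [ContinuousMul S]
    [CompactSpace S] {K : Set S} (hK : IsClopen K) :
    IsLocallyConstant (syntacticCon K).mkMulHom := by
  refine IsLocallyConstant.iff_isOpen_fiber_apply.2 fun a => ?_
  have hempty := isOpen_setOf_forall_mem_iff (X := Unit) (g := fun _ b => b) (by fun_prop) hK a
  have hright := isOpen_setOf_forall_mem_iff (g := fun v b : S => b * v) (by fun_prop) hK a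
  have hleft := isOpen_setOf_forall_mem_iff (g := fun u b : S => u * b) (by fun_prop) hK a
  have hboth := isOpen_setOf_forall_mem_iff (g := fun (p : S × S) b => p.1 * b * p.2)
    (by fun_prop) hK a
  convert (hempty.inter hright).inter (hleft.inter hboth) using 1
  ext b
  simp [syntacticCon_iff, forall_and]

/-- Numakura's theorem: compact totally disconnected semigroups are residually finite. -/
theorem exists_isLocallyConstant_notMem_image [TopologicalSpace S] [ContinuousMul S]
    [CompactSpace S] [T2Space S] [TotallyDisconnectedSpace S] {x : S} {Z : Set S}
    (hZ : IsClosed Z) (hx : x ∉ Z) :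
    ∃ (T : FinSgp) (q : S →ₙ* T.carrier), IsLocallyConstant q ∧ q x ∉ q '' Z := by
  obtain ⟨K, hK, hxK, hKZ⟩ := compact_exists_isClopen_in_isOpen hZ.isOpen_compl hx
  have hq := isLocallyConstant_mkMulHom_syntacticCon hK
  have hsurj : Surjective (syntacticCon K).mkMulHom := Quotient.mk_surjective
  have : Finite (syntacticCon K).Quotient :=
    Set.finite_univ_iff.1 (hsurj.range_eq ▸ hq.range_finite)
  refine ⟨FinSgp.mk (syntacticCon K).Quotient, (syntacticCon K).mkMulHom, hq, ?_⟩
  rintro ⟨z, hzZ, hzx⟩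
  have hzK : z ∈ K := (syntacticCon_iff.1 ((Con.eq _).1 hzx)).1.1.2 hxK
  exact hKZ hzK hzZ

end Separation

section Pseudovariety

theorem IsPseudovariety.iInter {ι : Sort*} {V : ι → Set FinSgp} (hV : ∀ i, IsPseudovariety (V i)) :
    IsPseudovariety (⋂ i, V i) := by
  simp only [IsPseudovariety, Set.mem_iInter]
  exact ⟨fun S hS T f hf i => (hV i).1 S (hS i) T f hf,
    fun S hS T f hf i => (hV i).2.1 S (hS i) T f hf,
    fun S hS T hT i => (hV i).2.2 S (hS i) T (hT i)⟩

theorem malcev_subset {V W U : Set FinSgp} (hU : IsPseudovariety U)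
    (h : ∀ S, MalcevWitness V W S → S ∈ U) : Malcev V W ⊆ U :=
  Set.sInter_subset_of_mem ⟨hU, h⟩

theorem MalcevWitness.mem_malcev {V W : Set FinSgp} {S : FinSgp} (h : MalcevWitness V W S) :
    S ∈ Malcev V W :=
  Set.mem_sInter.2 fun _ hU => hU.2 S h

theorem exists_surjective_comp_injective {S T : Type} [Semigroup S] [Semigroup T] [Finite T]
    (q : S →ₙ* T) : ∃ (M : FinSgp) (r : S →ₙ* M.carrier) (i : M.carrier →ₙ* T),
      Surjective r ∧ Injective i ∧ i.comp r = q :=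
  ⟨FinSgp.mk q.srange, q.srangeRestrict, MulMemClass.subtype q.srange,
    q.srangeRestrict_surjective, Subtype.val_injective, rfl⟩

theorem exists_lift_of_surjective {α S T : Type*} [Semigroup S] [Semigroup T] {f : S →ₙ* T}
    (hf : Surjective f) (φ : FreeSemigroup α →ₙ* T) :
    ∃ φ' : FreeSemigroup α →ₙ* S, f.comp φ' = φ := by
  choose g hg using fun a => hf (φ (FreeSemigroup.of a))
  exact ⟨FreeSemigroup.lift g, FreeSemigroup.hom_ext (funext fun a => by simp [hg])⟩

variable {α : Type} {F : Type} [Semigroup F]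

/-- The class of finite semigroups satisfying every identity `w ≈ w'` with `ψ w = ψ w'`. -/
def identityClass (ψ : FreeSemigroup α →ₙ* F) : Set FinSgp :=
  {T | ∀ φ : FreeSemigroup α →ₙ* T.carrier, FactorsThrough φ ψ}

theorem isPseudovariety_identityClass (ψ : FreeSemigroup α →ₙ* F) :
    IsPseudovariety (identityClass ψ) := by
  refine ⟨fun S hS T f hf φ w w' h => ?_, fun S hS T f hf φ w w' h => ?_,
    fun S hS T hT φ w w' h => ?_⟩
  · obtain ⟨φ, rfl⟩ := exists_lift_of_surjective hf φ
    exact congrArg f (hS φ h)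
  · exact hf (hS (f.comp φ) h)
  · exact Prod.ext (hS ((MulHom.fst _ _).comp φ) h) (hT ((MulHom.snd _ _).comp φ) h)

/-- Evaluation of words over `α` in `T`, as functions of the values of the letters. -/
def wordEval (T : Type) [Semigroup T] (α : Type) : FreeSemigroup α →ₙ* ((α → T) → T) :=
  MulHom.pi fun g => FreeSemigroup.lift g

/-- The pseudovariety of finite semigroups satisfying all identities valid in `T`. -/
def equationalClass (T : Type) [Semigroup T] : Set FinSgp :=
  ⋂ α : Type, identityClass (wordEval T α)

theorem isPseudovariety_equationalClass (T : Type) [Semigroup T] :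
    IsPseudovariety (equationalClass T) :=
  .iInter fun _ => isPseudovariety_identityClass _

theorem mem_equationalClass (T : FinSgp) : T ∈ equationalClass T.carrier := by
  refine Set.mem_iInter.2 fun α φ w w' h => ?_
  have hφ : FreeSemigroup.lift (φ ∘ FreeSemigroup.of) = φ := FreeSemigroup.lift_comp_of' φ
  rw [← hφ]
  exact congrFun h _

end Pseudovariety

section TopologicalGeneration

variable {α S : Type} [Semigroup S]

theorem closure_range_comp_of (ψ : FreeSemigroup α →ₙ* S) :
    Subsemigroup.closure (Set.range (ψ ∘ FreeSemigroup.of)) = ψ.srange := by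
  refine le_antisymm (Subsemigroup.closure_le.2 ?_) ?_
  · rintro _ ⟨a, rfl⟩
    exact ⟨_, rfl⟩
  · rintro _ ⟨w, rfl⟩
    induction w using FreeSemigroup.recOnMul with
    | ih1 a => exact Subsemigroup.subset_closure ⟨a, rfl⟩
    | ih2 a w ha hw => exact map_mul ψ _ _ ▸ Subsemigroup.mul_mem _ ha hw

theorem topGen_range_comp_of_iff [TopologicalSpace S] {ψ : FreeSemigroup α →ₙ* S} :
    TopGen S (Set.range (ψ ∘ FreeSemigroup.of)) ↔ DenseRange ψ := by
  rw [TopGen, closure_range_comp_of, MulHom.coe_srange, denseRange_iff_closure_range]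

theorem topGen_iff_denseRange_lift [TopologicalSpace S] {A : Set S} :
    TopGen S A ↔ DenseRange (FreeSemigroup.lift (Subtype.val : A → S)) := by
  rw [← topGen_range_comp_of_iff, FreeSemigroup.lift_comp_of, Subtype.range_coe]

theorem pvLocallyFinite_of_subset_identityClass {V : Set FinSgp}
    (h : ∀ (α : Type) [Finite α], ∃ (F : FinSgp) (ψ : FreeSemigroup α →ₙ* F.carrier),
      V ⊆ identityClass ψ) : PVLocallyFinite V := by
  rintro S _ _ ⟨⟨-, -, _, -⟩, hsep⟩ ⟨A, hA, hgen⟩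
  have : Finite A := hA
  obtain ⟨F, ψ, hV⟩ := h A
  set ρ := FreeSemigroup.lift (Subtype.val : A → S)
  have hfactor : FactorsThrough ρ ψ := by
    intro w w' hw
    by_contra hne
    obtain ⟨T, f, hT, -, -, hf⟩ := hsep _ _ hne
    exact hf (hV hT (f.comp ρ) hw)
  have hrange : (Set.range ρ).Finite := by
    cases isEmpty_or_nonempty S
    · exact Set.toFinite _
    · obtain ⟨k, hk⟩ := (Function.factorsThrough_iff ρ).1 hfactor
      exact hk ▸ Set.range_comp k ψ ▸ Set.toFinite _
  have hdense : Dense (Set.range ρ) := topGen_iff_denseRange_lift.1 hgen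
  exact Set.finite_univ_iff.1
    ((hrange.isClosed.closure_eq.symm.trans hdense.closure_eq) ▸ hrange)

theorem pvLocallyFinite_equationalClass (T : Type) [Semigroup T] [Finite T] :
    PVLocallyFinite (equationalClass T) :=
  pvLocallyFinite_of_subset_identityClass fun α _ =>
    ⟨FinSgp.mk ((α → T) → T), wordEval T α, Set.iInter_subset _ α⟩

end TopologicalGeneration

section ProMalcev

variable {S : Type} [Semigroup S] [TopologicalSpace S] [ContinuousMul S] [CompactSpace S]
  [T2Space S]

theorem FinManyRegJ.exists_mulHom_mem_sandwich [TotallyDisconnectedSpace S] (h : FinManyRegJ S) :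
    ∃ (T : FinSgp) (q : S →ₙ* T.carrier), IsLocallyConstant q ∧
      ∀ e f, IsIdempotentElem e → IsIdempotentElem f → q e = q f → e ∈ sandwich f := by
  obtain ⟨E, hEidem, hE⟩ := Set.exists_subset_bijOn {e : S | IsIdempotentElem e} sandwich
  have : Finite E := hE.finite_iff_finite.2 (finManyRegJ_iff_finite_sandwich.1 h)
  let Separated := {p : E × E // (p.1 : S) ∉ sandwich (p.2 : S)}
  choose T q hq hsep using fun p : Separated =>
    exists_isLocallyConstant_notMem_image (isClosed_sandwich _) p.2
  refine ⟨FinSgp.mk (∀ p, (T p).carrier), MulHom.pi q, (IsLocallyConstant.iff_continuous _).2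
    (continuous_pi fun p => (hq p).continuous), fun e f he hf hef => ?_⟩
  obtain ⟨e₀, he₀E, he₀⟩ := hE.surjOn ⟨e, he, rfl⟩
  obtain ⟨f₀, hf₀E, hf₀⟩ := hE.surjOn ⟨f, hf, rfl⟩
  have mem_self {g : S} (hg : IsIdempotentElem g) : g ∈ sandwich g :=
    (isRegularElt_of_isIdempotentElem hg).mem_sandwich
  suffices he₀f₀ : e₀ ∈ sandwich f₀ by
    exact hf₀ ▸ sandwich_le_of_mem he₀f₀ (he₀ ▸ mem_self he)
  by_contra hne
  obtain ⟨x, y, hxy⟩ := mem_sandwich.1 (he₀ ▸ mem_self (hEidem he₀E))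
  let p : Separated := ⟨(⟨e₀, he₀E⟩, ⟨f₀, hf₀E⟩), hne⟩
  have hpef : q p e = q p f := congrFun hef p
  refine hsep p ⟨x * f * y, hf₀ ▸ mem_sandwich.2 ⟨x, y, rfl⟩, ?_⟩
  calc q p (x * f * y) = q p (x * e * y) := by simp only [map_mul, hpef]
    _ = q p e₀ := congrArg (q p) hxy

theorem idemFiber_mem_LG {T : Type} [Semigroup T] {q : S →ₙ* T}
    (hq : ∀ e f, IsIdempotentElem e → IsIdempotentElem f → q e = q f → e ∈ sandwich f)
    {M : FinSgp} {r : S →ₙ* M.carrier} (hr : IsLocallyConstant r) (hsurj : Surjective r)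
    {g : M.carrier →ₙ* T} (hgr : g.comp r = q) (e : T) (he : e * e = e) :
    subFinSgp (idemFiber g e he) ∈ LG := by
  refine mem_LG_iff_idempotentsPrimitive.2 ?_
  intro a b ha hb hba
  let incl := MulMemClass.subtype (idemFiber g e he)
  obtain ⟨s, hs⟩ := hsurj (incl a)
  obtain ⟨a', -, ha', haa'⟩ := exists_isIdempotentElem_map_eq hr.continuous (N := ⊤) isClosed_univ
    (ha.map incl) ⟨s, trivial, hs⟩
  obtain ⟨b', hba', hb', hbb'⟩ := exists_isIdempotentElem_map_eq hr.continuous (isClosed_corner a')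
    (hb.map incl) (mem_map_corner hsurj (haa' ▸ map_mem_corner incl hba))
  have hqab : q a' = q b' := by
    rw [← hgr, MulHom.comp_apply, MulHom.comp_apply, haa', hbb']
    exact a.2.trans b.2.symm
  have hab : b' = a' := eq_of_mem_corner_of_mem_sandwich ha' hb' hba' (hq a' b' ha' hb' hqab)
  exact Subtype.ext (hbb'.symm.trans ((congrArg r hab).trans haa'))

end ProMalcev

theorem IsProfiniteSgp.exists_isProV_malcev {S : Type} [Semigroup S] [TopologicalSpace S]
    (hS : IsProfiniteSgp S) (h : FinManyRegJ S) :
    ∃ V, IsPseudovariety V ∧ PVLocallyFinite V ∧ IsProV (Malcev LG V) S := by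
  obtain ⟨_, _, _, _⟩ := id hS
  obtain ⟨T, q, hq, hJ⟩ := h.exists_mulHom_mem_sandwich
  refine ⟨equationalClass T.carrier, isPseudovariety_equationalClass _,
    pvLocallyFinite_equationalClass _, hS, fun x y hxy => ?_⟩
  obtain ⟨P, p, hp, hpxy⟩ := exists_isLocallyConstant_notMem_image (isClosed_singleton (x := y)) hxy
  obtain ⟨M, r, i, hr, hi, hir⟩ := exists_surjective_comp_injective (p.prod q)
  have hrloc : IsLocallyConstant r :=
    .desc r i (by rw [← MulHom.coe_comp, hir]; exact hp.prodMk hq) hi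
  have hsnd : ((MulHom.snd _ _).comp i).comp r = q := by rw [MulHom.comp_assoc, hir]; rfl
  refine ⟨M, r, MalcevWitness.mem_malcev ⟨T, _, mem_equationalClass T,
    idemFiber_mem_LG hJ hrloc hr hsnd⟩, hrloc.continuous, hr, fun hrxy => hpxy ⟨y, rfl, ?_⟩⟩
  have hpq : p.prod q y = p.prod q x := by rw [← hir, MulHom.comp_apply, MulHom.comp_apply, hrxy]
  exact congrArg Prod.fst hpq

section RelativelyFree

theorem exists_cofinal_quotients {V : Set FinSgp} (hV : IsPseudovariety V) (M : Type)
    [Semigroup M] :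
    ∃ (ι : Type) (T : ι → FinSgp) (φ : ∀ i, M →ₙ* (T i).carrier), (∀ i, T i ∈ V) ∧
      (∀ i, Surjective (φ i)) ∧
      ∀ U ∈ V, ∀ χ : M →ₙ* U.carrier, ∃ i, FactorsThrough χ (φ i) := by
  let ι := {c : Con M // ∃ T ∈ V, ∃ φ : M →ₙ* T.carrier, Surjective φ ∧ Con.ker φ = c}
  choose T hT φ hφ hker using fun i : ι => i.2
  refine ⟨ι, T, φ, hT, hφ, fun U hU χ => ?_⟩
  obtain ⟨N, r, i, hr, hi, rfl⟩ := exists_surjective_comp_injective χ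
  let c : ι := ⟨Con.ker r, N, hV.2.1 U hU N i hi, r, hr, rfl⟩
  refine ⟨c, fun w w' h => congrArg i ?_⟩
  have hc : Con.ker (φ c) w w' := h
  exact (hker c).le hc

theorem isProV_topologicalClosure_srange_pi {V : Set FinSgp} {M ι : Type} [Semigroup M]
    {T : ι → FinSgp} {φ : ∀ i, M →ₙ* (T i).carrier} (hT : ∀ i, T i ∈ V)
    (hφ : ∀ i, Surjective (φ i)) : IsProV V (MulHom.pi φ).srange.topologicalClosure := by
  have hcompact : CompactSpace (MulHom.pi φ).srange.topologicalClosure :=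
    isCompact_iff_compactSpace.1 (Subsemigroup.isClosed_topologicalClosure _).isCompact
  refine ⟨⟨inferInstance, hcompact, inferInstance, inferInstance⟩, fun x y hxy => ?_⟩
  obtain ⟨i, hi⟩ := Function.ne_iff.1 (Subtype.coe_injective.ne hxy)
  refine ⟨T i, (Pi.evalMulHom _ i).comp (MulMemClass.subtype _), hT i,
    (continuous_apply i).comp continuous_subtype_val, fun b => ?_, hi⟩
  obtain ⟨w, rfl⟩ := hφ i b
  exact ⟨⟨MulHom.pi φ w, Subsemigroup.le_topologicalClosure _ ⟨w, rfl⟩⟩, rfl⟩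

theorem PVLocallyFinite.exists_subset_identityClass {V : Set FinSgp} (hlf : PVLocallyFinite V)
    (hV : IsPseudovariety V) (α : Type) [Finite α] :
    ∃ (F : FinSgp) (ψ : FreeSemigroup α →ₙ* F.carrier), V ⊆ identityClass ψ := by
  obtain ⟨ι, T, φ, hT, hφ, hcofinal⟩ := exists_cofinal_quotients hV (FreeSemigroup α)
  let R := (MulHom.pi φ).srange.topologicalClosure
  let ψ : FreeSemigroup α →ₙ* R :=
    (MulHom.pi φ).codRestrict R fun w => Subsemigroup.le_topologicalClosure _ ⟨w, rfl⟩
  have hdense : DenseRange ψ := fun x => by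
    rw [closure_subtype, ← Set.range_comp]
    exact x.2
  have : Finite R := hlf R (isProV_topologicalClosure_srange_pi hT hφ)
    ⟨_, Set.finite_range _, topGen_range_comp_of_iff.2 hdense⟩
  refine ⟨FinSgp.mk R, ψ, fun U hU χ w w' h => ?_⟩
  obtain ⟨i, hi⟩ := hcofinal U hU χ
  exact hi (congrFun (congrArg Subtype.val h) i)

end RelativelyFree

section FiberImage

variable {α F : Type} [Semigroup F] {ψ : FreeSemigroup α →ₙ* F} {V W : Set FinSgp}

/-- The class of finite semigroups `T` such that the relational morphism `ψ ∘ φ⁻¹` induced by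
any homomorphism `φ` from the free semigroup to `T` has its fibers over idempotents in `W`. The
idempotents are given as `ψ w` so that empty fibers are ignored. -/
def fiberImageClass (W : Set FinSgp) (ψ : FreeSemigroup α →ₙ* F) : Set FinSgp :=
  {T | ∀ (φ : FreeSemigroup α →ₙ* T.carrier) (w : FreeSemigroup α) (hw : ψ w * ψ w = ψ w),
    subFinSgp ((idemFiber ψ (ψ w) hw).map φ) ∈ W}

theorem isPseudovariety_fiberImageClass (hW : IsPseudovariety W) (ψ : FreeSemigroup α →ₙ* F) :
    IsPseudovariety (fiberImageClass W ψ) := by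
  refine ⟨fun S hS T f hf φ w hw => ?_, fun S hS T f hf φ w hw => ?_,
    fun S hS T hT φ w hw => ?_⟩
  · obtain ⟨φ, rfl⟩ := exists_lift_of_surjective hf φ
    rw [← Subsemigroup.map_map]
    exact hW.1 _ (hS φ w hw) _ (f.subsemigroupMap _) (f.subsemigroupMap_surjective _)
  · have hφ := hS (f.comp φ) w hw
    rw [← Subsemigroup.map_map] at hφ
    refine hW.2.1 _ hφ _ (f.subsemigroupMap _) fun x y hxy => ?_
    exact Subtype.ext (hf (congrArg Subtype.val hxy))
  · have hfst := hS ((MulHom.fst _ _).comp φ) w hw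
    have hsnd := hT ((MulHom.snd _ _).comp φ) w hw
    rw [← Subsemigroup.map_map] at hfst hsnd
    refine hW.2.1 _ (hW.2.2 _ hfst _ hsnd) _ (((MulHom.fst _ _).subsemigroupMap _).prod
      ((MulHom.snd _ _).subsemigroupMap _)) fun x y hxy => ?_
    exact Subtype.ext (Prod.ext (congrArg (fun z => z.1.1) hxy) (congrArg (fun z => z.2.1) hxy))

theorem malcev_subset_fiberImageClass (hV : IsPseudovariety V) (hW : W ⊆ identityClass ψ) :
    Malcev V W ⊆ fiberImageClass V ψ := by
  refine malcev_subset (isPseudovariety_fiberImageClass hV ψ) ?_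
  rintro S ⟨T, f, hT, hf⟩ φ w hw
  have hfactor : FactorsThrough (f.comp φ) ψ := hW hT (f.comp φ)
  have he : f (φ w) * f (φ w) = f (φ w) := by
    simpa only [map_mul] using! hfactor ((map_mul ψ w w).trans hw)
  have hle : (idemFiber ψ (ψ w) hw).map φ ≤ idemFiber f (f (φ w)) he := by
    rintro _ ⟨u, hu, rfl⟩
    exact hfactor hu
  exact hV.2.1 _ (hf _ he) _ (Subsemigroup.inclusion hle) (Set.inclusion_injective hle)

end FiberImage

section GraphClosure

variable {M S F : Type} [Semigroup M] [Semigroup S] [TopologicalSpace S] [ContinuousMul S]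
  [Semigroup F] [TopologicalSpace F] [DiscreteTopology F]

/-- The closed relational morphism `ψ ∘ ρ⁻¹` from `S` to `F`: the closure of the set of pairs
`(ρ w, ψ w)`. -/
def graphClosure (ρ : M →ₙ* S) (ψ : M →ₙ* F) : Subsemigroup (S × F) :=
  (ρ.prod ψ).srange.topologicalClosure

variable {ρ : M →ₙ* S} {ψ : M →ₙ* F}

theorem isClosed_relFiber_graphClosure {e : F} (he : e * e = e) :
    IsClosed (relFiber (graphClosure ρ ψ) e he : Set S) :=
  (Subsemigroup.isClosed_topologicalClosure _).preimage (by fun_prop : Continuous fun s => (s, e))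

theorem exists_eq_of_mem_graphClosure {x : S} {r : F} (h : (x, r) ∈ graphClosure ρ ψ)
    {T : Type*} {π : S → T} (hπ : IsLocallyConstant π) : ∃ w, ψ w = r ∧ π (ρ w) = π x := by
  obtain ⟨_, ⟨hπw, hψw⟩, w, rfl⟩ := mem_closure_iff.1 h ((π ⁻¹' {π x}) ×ˢ {r})
    ((hπ _).prod (isOpen_discrete _)) ⟨rfl, rfl⟩
  exact ⟨w, hψw, hπw⟩

theorem map_fst_graphClosure [Finite F] (hρ : DenseRange ρ) :
    (graphClosure ρ ψ).map (MulHom.fst S F) = ⊤ := by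
  have hclosed : IsClosed ((graphClosure ρ ψ).map (MulHom.fst S F) : Set S) :=
    isClosedMap_fst_of_compactSpace _ (Subsemigroup.isClosed_topologicalClosure _)
  refine SetLike.coe_injective (Set.eq_univ_of_univ_subset ?_)
  rw [← hρ.closure_range]
  refine closure_minimal ?_ hclosed
  rintro _ ⟨w, rfl⟩
  exact ⟨(ρ w, ψ w), Subsemigroup.le_topologicalClosure _ ⟨w, rfl⟩, rfl⟩

theorem exists_mem_relFiber_graphClosure [CompactSpace S] [T2Space S] [Finite F]
    (hρ : DenseRange ρ) {f : S} (hf : IsIdempotentElem f) :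
    ∃ (e : F) (he : e * e = e), f ∈ relFiber (graphClosure ρ ψ) e he := by
  obtain ⟨⟨_, e⟩, hmem, hidem, rfl⟩ := exists_isIdempotentElem_map_eq (q := MulHom.fst S F)
    continuous_fst (Subsemigroup.isClosed_topologicalClosure _) hf
    (map_fst_graphClosure (ψ := ψ) hρ ▸ Subsemigroup.mem_top f)
  exact ⟨e, congrArg Prod.snd hidem, hmem⟩

end GraphClosure

theorem idempotentsPrimitive_relFiber_graphClosure {S α F : Type} [Semigroup S]
    [TopologicalSpace S] [ContinuousMul S] [Semigroup F] [TopologicalSpace F] [DiscreteTopology F]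
    {ρ : FreeSemigroup α →ₙ* S} {ψ : FreeSemigroup α →ₙ* F} {V : Set FinSgp}
    (hS : IsProV (Malcev LG V) S) (hV : V ⊆ identityClass ψ) {e : F} (he : e * e = e) :
    IdempotentsPrimitive (relFiber (graphClosure ρ ψ) e he) := by
  intro a b ha hb hba
  by_contra hne
  obtain ⟨T, f, hT, hf, -, hfne⟩ := hS.2 _ _ (Subtype.coe_injective.ne hne)
  have hfloc : IsLocallyConstant f := (IsLocallyConstant.iff_continuous _).2 hf
  obtain ⟨w, rfl, -⟩ := exists_eq_of_mem_graphClosure a.2 hfloc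
  let N := (idemFiber ψ (ψ w) he).map (f.comp ρ)
  have hN : IdempotentsPrimitive N := mem_LG_iff_idempotentsPrimitive.1
    (malcev_subset_fiberImageClass isPseudovariety_LG hV hT (f.comp ρ) w he)
  let k : relFiber (graphClosure ρ ψ) (ψ w) he →ₙ* N :=
    (f.comp (MulMemClass.subtype _)).codRestrict N fun x => by
      obtain ⟨u, hu, hfu⟩ := exists_eq_of_mem_graphClosure x.2 hfloc
      exact ⟨u, hu, hfu⟩
  exact hfne (congrArg Subtype.val (hN (ha.map k) (hb.map k) (map_mem_corner k hba)))

theorem IsProV.finManyRegJ {S : Type} [Semigroup S] [TopologicalSpace S] {V : Set FinSgp}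
    (hS : IsProV (Malcev LG V) S) (hV : IsPseudovariety V) (hlf : PVLocallyFinite V) {A : Set S}
    (hA : A.Finite) (hgen : TopGen S A) : FinManyRegJ S := by
  obtain ⟨_, _, _, -⟩ := hS.1
  have : Finite A := hA
  obtain ⟨F, ψ, hVψ⟩ := hlf.exists_subset_identityClass hV A
  let μ := graphClosure (FreeSemigroup.lift (Subtype.val : A → S)) ψ
  let J (e : {e : F.carrier // e * e = e}) : Set (Subsemigroup S) :=
    sandwich '' {f | f ∈ relFiber μ e.1 e.2 ∧ IsIdempotentElem f}
  have hJ (e) : (J e).Subsingleton := by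
    rintro _ ⟨f, ⟨hfμ, hf⟩, rfl⟩ _ ⟨g, ⟨hgμ, hg⟩, rfl⟩
    exact (idempotentsPrimitive_relFiber_graphClosure hS hVψ e.2).sandwich_eq
      (isClosed_relFiber_graphClosure e.2) hfμ hgμ hf hg
  have hfinite : (⋃ e, J e).Finite := Set.finite_iUnion fun e => (hJ e).finite
  refine finManyRegJ_iff_finite_sandwich.2 (hfinite.subset ?_)
  rintro _ ⟨f, hf, rfl⟩
  obtain ⟨e, he, hfμ⟩ := exists_mem_relFiber_graphClosure (ψ := ψ)
    (topGen_iff_denseRange_lift.1 hgen) hf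
  exact Set.mem_iUnion.2 ⟨⟨e, he⟩, f, ⟨hfμ, hf⟩, rfl⟩

/-- A finitely generated profinite semigroup has finitely many regular
`J`-classes iff it is pro-(LG ⓜ V) for some locally finite pseudovariety `V`. -/
theorem finManyRegJ_iff_proLGMalcev
    (S : Type) [Semigroup S] [TopologicalSpace S] (hS : IsProfiniteSgp S)
    (A : Set S) (hA : A.Finite) (hgen : TopGen S A) :
    FinManyRegJ S ↔
      ∃ V : Set FinSgp, IsPseudovariety V ∧ PVLocallyFinite V ∧
        IsProV (Malcev LG V) S := by
  refine ⟨hS.exists_isProV_malcev, ?_⟩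
  rintro ⟨V, hV, hlf, hpro⟩
  exact hpro.finManyRegJ hV hlf hA hgen
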